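/- Let E, A_xx be M_x×M_x, A_xv be M_x×M_v, A_zx be M_z×M_x, A_zv be M_z×M_v, and Φ be M_v×M_z complex matrices, with I_{M_v} − Φ A_zv invertible, and define A = A_xx + A_xv (I − Φ A_zv)^{-1} Φ A_zx. Let Λ_r be any set of M_x + 1 distinct complex numbers. Then the polynomial λ ↦ det(λE − A) is not identically zero (i.e., the descriptor pair (E, A) is regular) if and only if there exists λ_0 ∈ Λ_r such that the (M_x+M_v)×(M_x+M_v) matrix Θ(λ_0) = [[λ_0 E − A_xx, −A_xv],[−Φ A_zx, I − Φ A_zv]] is invertible. -/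

import Mathlib

open Polynomial

/-- **Theorem 1 (regularity of the NDS).** Under the well-posedness condition that
`I − Φ Azv` is invertible, with `A = Axx + Axv (I − Φ Azv)⁻¹ Φ Azx`, and with `Λr` any
set of `Mx + 1` distinct complex numbers, the polynomial `λ ↦ det (λE − A)` is not
identically zero (i.e. the descriptor pair `(E, A)` is regular) if and only if there is
a `λ₀ ∈ Λr` at which the matrix `Θ(λ₀) = [[λ₀E − Axx, −Axv],[−Φ Azx, I − Φ Azv]]` is
invertible. -/
theorem nds_regularity_iff_theta_invertible_on_finite_set
    (Mx Mv Mz : ℕ)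
    (E Axx : Matrix (Fin Mx) (Fin Mx) ℂ)
    (Axv : Matrix (Fin Mx) (Fin Mv) ℂ)
    (Azx : Matrix (Fin Mz) (Fin Mx) ℂ)
    (Azv : Matrix (Fin Mz) (Fin Mv) ℂ)
    (Φ : Matrix (Fin Mv) (Fin Mz) ℂ)
    (hwp : IsUnit ((1 : Matrix (Fin Mv) (Fin Mv) ℂ) - Φ * Azv))
    (A : Matrix (Fin Mx) (Fin Mx) ℂ)
    (hA : A = Axx + Axv * ((1 : Matrix (Fin Mv) (Fin Mv) ℂ) - Φ * Azv)⁻¹ * (Φ * Azx))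
    (Λr : Finset ℂ) (hΛr : Λr.card = Mx + 1) :
    Matrix.det ((X : ℂ[X]) • E.map C - A.map C) ≠ 0 ↔
      ∃ lam₀ ∈ Λr,
        IsUnit (Matrix.fromBlocks (lam₀ • E - Axx) (-Axv)
          (-(Φ * Azx)) ((1 : Matrix (Fin Mv) (Fin Mv) ℂ) - Φ * Azv)) := by
  have hdeg : (Matrix.det ((X : ℂ[X]) • E.map C - A.map C)).natDegree ≤ Mx := by
    have h := natDegree_det_X_add_C_le E (-A)
    have e : (-A).map (C : ℂ → ℂ[X]) = -(A.map C) := by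
      ext1 i j
      simp
    rw [e, ← sub_eq_add_neg, Fintype.card_fin] at h
    exact h
  have heval : ∀ z : ℂ, (Matrix.det ((X : ℂ[X]) • E.map C - A.map C)).eval z
      = Matrix.det (z • E - A) := by
    intro z
    rw [← coe_evalRingHom, RingHom.map_det]
    congr 1
    ext i j
    simp
    exact mul_comm _ _
  have hunit : ∀ z : ℂ, IsUnit (Matrix.fromBlocks (z • E - Axx) (-Axv)
          (-(Φ * Azx)) ((1 : Matrix (Fin Mv) (Fin Mv) ℂ) - Φ * Azv)) ↔
      Matrix.det (z • E - A) ≠ 0 := by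
    intro z
    have hd := (Matrix.isUnit_iff_isUnit_det _).1 hwp
    letI := hwp.invertible
    rw [Matrix.isUnit_iff_isUnit_det, Matrix.det_fromBlocks₂₂, IsUnit.mul_iff,
      and_iff_right hd, isUnit_iff_ne_zero, Matrix.invOf_eq_nonsing_inv, hA]
    simp only [Matrix.neg_mul, Matrix.mul_neg, neg_neg, sub_sub]
  simp only [hunit, ← heval]
  constructor
  · intro h
    by_contra! hc
    exact h (eq_zero_of_natDegree_lt_card_of_eval_eq_zero' _ Λr hc (by omega))
  · rintro ⟨z, _, hz⟩ h
    rw [h] at hz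
    simp at hz
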